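/- Let X be a nonempty metric space and μ a Borel probability measure on X. Let (a_n)_{n∈ℕ} be positive real numbers with ∑_n a_n = 1, and for each n let (b_{n,k})_{k∈ℕ} be nonnegative real numbers with ∑_k b_{n,k} ≤ 1 and let x_{n,k} ∈ X be points. If ∑_{n,k} a_n b_{n,k} δ_{x_{n,k}} ≤ μ (as measures), then there exist Borel probability measures μ_n on X, n ∈ ℕ, such that ∑_k b_{n,k} δ_{x_{n,k}} ≤ μ_n for every n and ∑_n a_n μ_n = μ. -/

import Mathlib

open MeasureTheory

/-- Every finite measure is its total mass times a probability measure, as soon as the space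
carries a probability measure at all. -/
lemma exists_isProbabilityMeasure_smul_eq {X : Type*} [MeasurableSpace X]
    (μ ρ : Measure X) [IsProbabilityMeasure μ] [IsFiniteMeasure ρ] :
    ∃ κ : Measure X, IsProbabilityMeasure κ ∧ ρ Set.univ • κ = ρ := by
  rcases eq_or_ne ρ 0 with rfl | hρ
  · exact ⟨μ, inferInstance, by simp⟩
  · have hρ' : ρ Set.univ ≠ 0 := by simpa using hρ
    refine ⟨(ρ Set.univ)⁻¹ • ρ, ⟨?_⟩, ?_⟩
    · simp [ENNReal.inv_mul_cancel hρ' (measure_ne_top ρ _)]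
    · rw [smul_smul, ENNReal.mul_inv_cancel hρ' (measure_ne_top ρ _), one_smul]

/-- If a convex combination of subprobability measures `ν i` is bounded by a probability measure
`μ`, then the `ν i` can be enlarged to probability measures whose convex combination is `μ`. -/
lemma exists_isProbabilityMeasure_ge_sum_smul_eq {X ι : Type*} [MeasurableSpace X]
    (μ : Measure X) [IsProbabilityMeasure μ] (c : ι → ENNReal) (hc : ∑' i, c i = 1)
    (ν : ι → Measure X) (hν : ∀ i, ν i Set.univ ≤ 1)
    (hle : Measure.sum (fun i => c i • ν i) ≤ μ) :
    ∃ μs : ι → Measure X, (∀ i, IsProbabilityMeasure (μs i)) ∧ (∀ i, ν i ≤ μs i) ∧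
      Measure.sum (fun i => c i • μs i) = μ := by
  set σ : Measure X := Measure.sum (fun i => c i • ν i) with hσ
  have : IsFiniteMeasure σ := isFiniteMeasure_of_le μ hle
  obtain ⟨κ, hκ, hκρ⟩ := exists_isProbabilityMeasure_smul_eq μ (μ - σ)
  have hσuniv : σ Set.univ = ∑' i, c i * ν i Set.univ := by
    simp [hσ, Measure.sum_apply _ MeasurableSet.univ]
  have hmass : ∑' i, c i * (1 - ν i Set.univ) = (μ - σ) Set.univ := by
    rw [Measure.sub_apply MeasurableSet.univ hle, measure_univ]
    refine ENNReal.eq_sub_of_add_eq (measure_ne_top σ _) ?_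
    rw [hσuniv, ← ENNReal.tsum_add]
    refine (tsum_congr fun i => ?_).trans hc
    rw [← mul_add, tsub_add_cancel_of_le (hν i), mul_one]
  refine ⟨fun i => ν i + (1 - ν i Set.univ) • κ, fun i => ⟨?_⟩,
    fun i => Measure.le_add_right le_rfl, ?_⟩
  · simp [add_tsub_cancel_of_le (hν i)]
  · calc Measure.sum (fun i => c i • (ν i + (1 - ν i Set.univ) • κ))
        = σ + (μ - σ) Set.univ • κ := by
          ext s hs
          simp only [hσ, Measure.sum_apply _ hs, Measure.add_apply, Measure.smul_apply,
            smul_eq_mul, mul_add, ENNReal.tsum_add, ← mul_assoc, ENNReal.tsum_mul_right, hmass]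
      _ = μ := by rw [hκρ, add_comm, Measure.sub_add_cancel_of_le hle]

/-- If `∑_{n,k} aₙ bₙₖ δ_{xₙₖ} ≤ μ` where `aₙ > 0` sum to `1` and, for each `n`,
`bₙₖ ≥ 0` with `∑ₖ bₙₖ ≤ 1`, then there are Borel probability measures `μₙ` with
`∑ₖ bₙₖ δ_{xₙₖ} ≤ μₙ` for every `n` and `∑ₙ aₙ μₙ = μ`. -/
theorem exists_decomposition_of_atoms_le {X : Type*} [MetricSpace X] [Nonempty X]
    [MeasurableSpace X] [BorelSpace X]
    (μ : Measure X) [IsProbabilityMeasure μ]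
    (a : ℕ → ℝ) (ha : ∀ n, 0 < a n) (hasum : ∑' n, a n = 1)
    (b : ℕ → ℕ → ℝ) (hb : ∀ n k, 0 ≤ b n k) (hbsum : ∀ n, ∑' k, b n k ≤ 1)
    (x : ℕ → ℕ → X)
    (hle : Measure.sum
        (fun p : ℕ × ℕ => ENNReal.ofReal (a p.1 * b p.1 p.2) • Measure.dirac (x p.1 p.2))
      ≤ μ) :
    ∃ μs : ℕ → Measure X,
      (∀ n, IsProbabilityMeasure (μs n)) ∧
      (∀ n, Measure.sum (fun k => ENNReal.ofReal (b n k) • Measure.dirac (x n k)) ≤ μs n) ∧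
      Measure.sum (fun n => ENNReal.ofReal (a n) • μs n) = μ := by
  have hsummable : Summable a := by
    by_contra h
    simp [tsum_eq_zero_of_not_summable h] at hasum
  have hc : ∑' n, ENNReal.ofReal (a n) = 1 := by
    rw [← ENNReal.ofReal_tsum_of_nonneg (fun n => (ha n).le) hsummable, hasum,
      ENNReal.ofReal_one]
  have hsum : Measure.sum (fun n => ENNReal.ofReal (a n) •
      Measure.sum (fun k => ENNReal.ofReal (b n k) • Measure.dirac (x n k))) ≤ μ := by
    refine le_of_eq_of_le ?_ hle
    ext s hs
    simp only [Measure.sum_apply _ hs, Measure.smul_apply, smul_eq_mul,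
      ENNReal.ofReal_mul (ha _).le, ENNReal.tsum_prod', mul_assoc, ENNReal.tsum_mul_left]
  refine exists_isProbabilityMeasure_ge_sum_smul_eq μ _ hc _ (fun n => ?_) hsum
  have hmass : Measure.sum (fun k => ENNReal.ofReal (b n k) • Measure.dirac (x n k)) Set.univ
      = ∑' k, ENNReal.ofReal (b n k) := by
    simp [Measure.sum_apply _ MeasurableSet.univ]
  -- The bound by `μ` makes `b n` summable, so that `hbsum n` is about the actual sum.
  have hfinite : ∑' k, ENNReal.ofReal (b n k) ≠ ⊤ := by
    intro htop
    have h := (Measure.le_sum (fun n => ENNReal.ofReal (a n) •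
      Measure.sum (fun k => ENNReal.ofReal (b n k) • Measure.dirac (x n k))) n).trans hsum
      Set.univ
    rw [Measure.smul_apply, hmass, htop, smul_eq_mul,
      ENNReal.mul_top (ENNReal.ofReal_pos.2 (ha n)).ne', measure_univ] at h
    exact ENNReal.one_ne_top (top_le_iff.1 h)
  have hbsummable : Summable (b n) := by
    simpa [ENNReal.toReal_ofReal (hb n _)] using ENNReal.summable_toReal hfinite
  rw [hmass, ← ENNReal.ofReal_tsum_of_nonneg (hb n) hbsummable]
  exact ENNReal.ofReal_le_one.2 (hbsum n)
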